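/- arXiv:2207.04387 — 3 statements merged into one kernel-verified Lean document; each statement's English description precedes it below -/
import Mathlib

section
/- Let U : ℝ^d → ℝ ∪ {+∞} be measurable with 0 < ∫_{ℝ^d} e^{−U(x)} dx < ∞, and for each λ > 0 let U_λ : ℝ^d → ℝ ∪ {+∞} be measurable such that: (i) U_λ(x) ≤ U(x) for all x and all λ > 0; (ii) for each x, λ ↦ U_λ(x) is nonincreasing in λ; (iii) for each x, U_λ(x) → U(x) as λ ↓ 0; (iv) ∫_{ℝ^d} e^{−U_{λ₀}(x)} dx < ∞ for some λ₀ > 0. Let π and π_λ denote the probability measures with Lebesgue densities proportional to e^{−U} and e^{−U_λ}, respectively. Then ‖π_λ − π‖_TV → 0 as λ ↓ 0. -/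
open scoped ENNReal Topology
open MeasureTheory Filter

/-- `e^{-u}` for `u ∈ ℝ ∪ {±∞}`, valued in `ℝ≥0∞`. -/
noncomputable def expNeg (u : EReal) : ℝ≥0∞ :=
  if u = ⊤ then 0 else if u = ⊥ then ⊤ else ENNReal.ofReal (Real.exp (-u.toReal))

/-- The total variation distance `sup_{A Borel} |μ(A) − ν(A)|`. -/
noncomputable def tvDist {α : Type*} [MeasurableSpace α] (μ ν : Measure α) : ℝ :=
  ⨆ A : {A : Set α // MeasurableSet A}, |(μ A.1).toReal - (ν A.1).toReal|

/-! The normalizing constants converge by dominated convergence, so the normalized densities `p i`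
converge pointwise to the normalized limit density `q`. Pointwise convergence of densities of equal
mass already forces convergence in total variation (Scheffé): the distance is at most the integral
of the positive part of `q - p i`, and that positive part tends to `0` and is dominated by `q`,
whatever the size of `p i`. -/

theorem expNeg_eq_exp_neg (u : EReal) : expNeg u = EReal.exp (-u) := by
  induction u <;> simp [expNeg, ← EReal.coe_neg]

theorem continuous_expNeg : Continuous expNeg := by
  simp only [funext expNeg_eq_exp_neg]
  exact ENNReal.continuous_exp.comp continuous_neg

theorem antitone_expNeg : Antitone expNeg := fun u v huv => by
  simpa only [expNeg_eq_exp_neg] using EReal.exp_monotone (EReal.neg_le_neg_iff.2 huv)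

section

variable {α ι : Type*} [MeasurableSpace α] {μ ν : Measure α} {l : Filter ι}

theorem tvDist_nonneg (μ ν : Measure α) : 0 ≤ tvDist μ ν :=
  Real.iSup_nonneg fun _ => abs_nonneg _

theorem tvDist_le_of_le_add [IsFiniteMeasure μ] [IsFiniteMeasure ν] {κ : Measure α}
    [IsFiniteMeasure κ] (hmass : μ Set.univ = ν Set.univ) (hle : ν ≤ μ + κ) :
    tvDist μ ν ≤ κ.real Set.univ := by
  have sub_le (A : Set α) : ν.real A - μ.real A ≤ κ.real Set.univ := by
    have hA : ν.real A ≤ μ.real A + κ.real A := by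
      rw [← measureReal_add_apply]
      exact ENNReal.toReal_mono (measure_ne_top _ _) (hle A)
    linarith [measureReal_mono (μ := κ) A.subset_univ]
  have : Nonempty {A : Set α // MeasurableSet A} := ⟨⟨∅, .empty⟩⟩
  refine ciSup_le fun ⟨A, hA⟩ => abs_sub_le_iff.2 ⟨?_, sub_le A⟩
  -- As the masses agree, the excess of `μ` over `ν` on `A` is that of `ν` over `μ` on `Aᶜ`.
  have hmass_real : μ.real Set.univ = ν.real Set.univ := congrArg ENNReal.toReal hmass
  have hcompl := sub_le Aᶜ
  rw [measureReal_compl hA, measureReal_compl hA, hmass_real, sub_sub_sub_cancel_left] at hcompl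
  exact hcompl

theorem withDensity_le_withDensity_add_withDensity_tsub {p : α → ℝ≥0∞} (hp : AEMeasurable p μ)
    (q : α → ℝ≥0∞) :
    μ.withDensity q ≤ μ.withDensity p + μ.withDensity fun x => q x - p x := by
  refine Measure.le_iff.2 fun A hA => ?_
  simp only [Measure.add_apply, withDensity_apply _ hA]
  rw [← lintegral_add_left' hp.restrict]
  exact lintegral_mono fun x => le_add_tsub

theorem tvDist_withDensity_le_lintegral_tsub {p q : α → ℝ≥0∞} (hp : AEMeasurable p μ)
    (hmass : ∫⁻ x, p x ∂μ = ∫⁻ x, q x ∂μ) (hq : ∫⁻ x, q x ∂μ ≠ ∞) :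
    tvDist (μ.withDensity p) (μ.withDensity q) ≤ (∫⁻ x, q x - p x ∂μ).toReal := by
  have := isFiniteMeasure_withDensity (hmass.trans_ne hq)
  have := isFiniteMeasure_withDensity hq
  have := isFiniteMeasure_withDensity (μ := μ) (f := fun x => q x - p x)
    (ne_top_of_le_ne_top hq (lintegral_mono fun x => tsub_le_self))
  have h := tvDist_le_of_le_add (by simpa using hmass)
    (withDensity_le_withDensity_add_withDensity_tsub hp q)
  simpa [Measure.real] using h

theorem tendsto_tvDist_withDensity [l.IsCountablyGenerated] {p : ι → α → ℝ≥0∞} {q : α → ℝ≥0∞}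
    (hp : ∀ᶠ i in l, AEMeasurable (p i) μ) (hq : AEMeasurable q μ)
    (hmass : ∀ᶠ i in l, ∫⁻ x, p i x ∂μ = ∫⁻ x, q x ∂μ) (hfin : ∫⁻ x, q x ∂μ ≠ ∞)
    (hlim : ∀ᵐ x ∂μ, Tendsto (p · x) l (𝓝 (q x))) :
    Tendsto (fun i => tvDist (μ.withDensity (p i)) (μ.withDensity q)) l (𝓝 0) := by
  have htsub : ∀ᵐ x ∂μ, Tendsto (fun i => q x - p i x) l (𝓝 0) := by
    filter_upwards [hlim, ae_lt_top' hq hfin] with x hx hqx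
    simpa only [tsub_self] using ENNReal.Tendsto.sub tendsto_const_nhds hx (.inl hqx.ne)
  have hint : Tendsto (fun i => ∫⁻ x, q x - p i x ∂μ) l (𝓝 0) := by
    simpa only [lintegral_zero, Pi.sub_apply] using
      tendsto_lintegral_filter_of_dominated_convergence' q (hp.mono fun i hi => hq.sub hi)
        (.of_forall fun i => .of_forall fun x => tsub_le_self) hfin htsub
  refine squeeze_zero' (.of_forall fun i => tvDist_nonneg _ _) ?_
    ((ENNReal.tendsto_toReal ENNReal.zero_ne_top).comp hint)
  filter_upwards [hp, hmass] with i hpi hi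
  exact tvDist_withDensity_le_lintegral_tsub hpi hi hfin

theorem lintegral_div_lintegral_self {f : α → ℝ≥0∞} (hf : AEMeasurable f μ)
    (h0 : ∫⁻ x, f x ∂μ ≠ 0) (hfin : ∫⁻ x, f x ∂μ ≠ ∞) :
    ∫⁻ x, f x / ∫⁻ y, f y ∂μ ∂μ = 1 := by
  simp only [div_eq_mul_inv]
  rw [lintegral_mul_const'' _ hf, ENNReal.mul_inv_cancel h0 hfin]

theorem tendsto_tvDist_withDensity_div_lintegral [l.IsCountablyGenerated]
    {f : ι → α → ℝ≥0∞} {g : α → ℝ≥0∞}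
    (hf : ∀ᶠ i in l, AEMeasurable (f i) μ) (hg : AEMeasurable g μ)
    (hlim : ∀ᵐ x ∂μ, Tendsto (f · x) l (𝓝 (g x)))
    (hint : Tendsto (fun i => ∫⁻ x, f i x ∂μ) l (𝓝 (∫⁻ x, g x ∂μ)))
    (h0 : ∫⁻ x, g x ∂μ ≠ 0) (hfin : ∫⁻ x, g x ∂μ ≠ ∞) :
    Tendsto (fun i => tvDist (μ.withDensity fun x => f i x / ∫⁻ y, f i y ∂μ)
      (μ.withDensity fun x => g x / ∫⁻ y, g y ∂μ)) l (𝓝 0) := by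
  have hg1 := lintegral_div_lintegral_self hg h0 hfin
  refine tendsto_tvDist_withDensity (hf.mono fun i hi => hi.div_const _) (hg.div_const _) ?_
    (hg1.trans_ne ENNReal.one_ne_top) ?_
  · filter_upwards [hf, hint.eventually_ne h0, hint.eventually_ne hfin] with i hfi hi0 hifin
    rw [hg1, lintegral_div_lintegral_self hfi hi0 hifin]
  · exact hlim.mono fun x hx => ENNReal.Tendsto.div hx (.inr h0) hint (.inl hfin)

theorem stmt4_general [l.NeBot] [l.IsCountablyGenerated] {U W : α → EReal} {V : ι → α → EReal}
    (hU : AEMeasurable U μ) (hV : ∀ᶠ i in l, AEMeasurable (V i) μ)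
    (hlim : ∀ᵐ x ∂μ, Tendsto (V · x) l (𝓝 (U x)))
    (hWV : ∀ᶠ i in l, ∀ᵐ x ∂μ, W x ≤ V i x)
    (hW : ∫⁻ x, expNeg (W x) ∂μ ≠ ∞) (h0 : ∫⁻ x, expNeg (U x) ∂μ ≠ 0) :
    Tendsto
      (fun i => tvDist (μ.withDensity fun x => expNeg (V i x) / ∫⁻ y, expNeg (V i y) ∂μ)
        (μ.withDensity fun x => expNeg (U x) / ∫⁻ y, expNeg (U y) ∂μ))
      l (𝓝 0) := by
  have hmeas : ∀ᶠ i in l, AEMeasurable (fun x => expNeg (V i x)) μ :=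
    hV.mono fun i hi => continuous_expNeg.measurable.comp_aemeasurable hi
  have hdom : ∀ᶠ i in l, ∀ᵐ x ∂μ, expNeg (V i x) ≤ expNeg (W x) :=
    hWV.mono fun i hi => hi.mono fun x hx => antitone_expNeg hx
  have hexp : ∀ᵐ x ∂μ, Tendsto (fun i => expNeg (V i x)) l (𝓝 (expNeg (U x))) :=
    hlim.mono fun x hx => (continuous_expNeg.tendsto _).comp hx
  have hint : Tendsto (fun i => ∫⁻ x, expNeg (V i x) ∂μ) l (𝓝 (∫⁻ x, expNeg (U x) ∂μ)) :=
    tendsto_lintegral_filter_of_dominated_convergence' _ hmeas hdom hW hexp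
  have hfin : ∫⁻ x, expNeg (U x) ∂μ ≤ ∫⁻ x, expNeg (W x) ∂μ :=
    le_of_tendsto hint (hdom.mono fun i hi => lintegral_mono_ae hi)
  exact tendsto_tvDist_withDensity_div_lintegral hmeas
    (continuous_expNeg.measurable.comp_aemeasurable hU) hexp hint h0 (ne_top_of_le_ne_top hW hfin)

end

/-- If `U_λ ≤ U`, `λ ↦ U_λ(x)` is nonincreasing, `U_λ(x) → U(x)` as `λ ↓ 0`, and
`e^{−U_{λ₀}}` has finite integral for some `λ₀ > 0`, then
`‖π_λ − π‖_TV → 0` as `λ ↓ 0`. -/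
theorem stmt4 {d : ℕ} (U : EuclideanSpace ℝ (Fin d) → EReal)
    (hU : Measurable U) (hUbot : ∀ x, U x ≠ ⊥)
    (hZUpos : 0 < ∫⁻ x, expNeg (U x))
    (hZUfin : (∫⁻ x, expNeg (U x)) < ∞)
    (Ulam : ℝ → EuclideanSpace ℝ (Fin d) → EReal)
    (hmeas : ∀ l, 0 < l → Measurable (Ulam l))
    (hbot : ∀ l, 0 < l → ∀ x, Ulam l x ≠ ⊥)
    (h1 : ∀ l, 0 < l → ∀ x, Ulam l x ≤ U x)
    (h2 : ∀ x : EuclideanSpace ℝ (Fin d), ∀ l m : ℝ, 0 < l → l ≤ m → Ulam m x ≤ Ulam l x)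
    (h3 : ∀ x : EuclideanSpace ℝ (Fin d),
      Tendsto (fun l => Ulam l x) (𝓝[>] (0 : ℝ)) (𝓝 (U x)))
    (h4 : ∃ l₀ : ℝ, 0 < l₀ ∧ (∫⁻ x, expNeg (Ulam l₀ x)) < ∞) :
    Tendsto
      (fun l =>
        tvDist
          (volume.withDensity fun x => expNeg (Ulam l x) / ∫⁻ y, expNeg (Ulam l y))
          (volume.withDensity fun x => expNeg (U x) / ∫⁻ y, expNeg (U y)))
      (𝓝[>] (0 : ℝ)) (𝓝 0) := by
  obtain ⟨l₀, hl₀, hfin⟩ := h4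
  exact stmt4_general hU.aemeasurable
    (eventually_mem_nhdsWithin.mono fun l hl => (hmeas l hl).aemeasurable) (.of_forall h3)
    (eventually_of_mem (Ioc_mem_nhdsGT hl₀) fun l hl => .of_forall fun x => h2 x l l₀ hl.1 hl.2)
    hfin.ne hZUpos.ne'
end

section
/- Let ψ : ℝ^d → ℝ be continuously differentiable and strictly convex, and suppose that for each x ∈ ℝ^d the map y ↦ D_ψ(y, x) is coercive (i.e., D_ψ(y, x) → +∞ as ‖y‖ → +∞). Let g : ℝ^d → ℝ ∪ {+∞} be proper, lower semicontinuous, and bounded below. Then for each x ∈ ℝ^d, the map λ ↦ env←_{λ,g}^ψ(x) is nonincreasing on (0, ∞), env←_{λ,g}^ψ(x) ≤ g(x) for every λ > 0, and env←_{λ,g}^ψ(x) → g(x) as λ ↓ 0 (monotonically increasing to g(x)). -/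
open scoped RealInnerProductSpace Topology
open Filter

/-- The Bregman divergence associated with a differentiable function `ψ`. -/
noncomputable def bregmanDiv {d : ℕ} (ψ : EuclideanSpace ℝ (Fin d) → ℝ)
    (x y : EuclideanSpace ℝ (Fin d)) : ℝ :=
  ψ x - ψ y - ⟪gradient ψ y, x - y⟫

/-- The left Bregman–Moreau envelope of an extended-real-valued `g` associated with `ψ`. -/
noncomputable def leftEnvE {d : ℕ} (ψ : EuclideanSpace ℝ (Fin d) → ℝ)
    (g : EuclideanSpace ℝ (Fin d) → EReal) (lam : ℝ)
    (x : EuclideanSpace ℝ (Fin d)) : EReal :=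
  ⨅ y : EuclideanSpace ℝ (Fin d), (g y + ((1 / lam * bregmanDiv ψ y x : ℝ) : EReal))

/-!
The envelope at `x` is the value `⨅ y, g y + t * φ y` of a penalized problem with penalty
`φ = bregmanDiv ψ · x` and weight `t = 1 / λ`. As `t → ∞` this value increases to `g x` as soon as
it is not `⊥` for one weight and small values of `φ` force `y` to be close to `x`: near `x` lower
semicontinuity controls `g`, while away from `x` the penalty is bounded below by some `δ > 0` and
its growing weight wins.

A Bregman divergence has this localization property because it is a strictly convex function of `y`
with minimizer `x`: on a small sphere around `x` it has a positive minimum by compactness, and by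
convexity it is at least as large outside the sphere.
-/

section Penalization

variable {X : Type*} {g : X → EReal} {φ : X → ℝ} {x : X} {s t : ℝ}

/-- The optimal value of the problem of minimizing `g` with the penalty `φ` at weight `t`. In the
paper's notation the envelope of `g` at `x` is the case `φ = D_ψ(·, x)`, `t = 1 / λ`. -/
noncomputable def penalizedInf (g : X → EReal) (φ : X → ℝ) (t : ℝ) : EReal :=
  ⨅ y, g y + (t * φ y : ℝ)

theorem penalizedInf_mono (hφ : ∀ y, 0 ≤ φ y) : Monotone (penalizedInf g φ) := fun _ _ hst =>
  iInf_mono fun y => add_le_add_right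
    (EReal.coe_le_coe_iff.2 (mul_le_mul_of_nonneg_right hst (hφ y))) _

theorem penalizedInf_le_of_eq_zero (hx : φ x = 0) : penalizedInf g φ t ≤ g x :=
  (iInf_le _ x).trans_eq (by simp [hx])

theorem le_penalizedInf {a : EReal} (ht : 0 ≤ t) (hφ : ∀ y, 0 ≤ φ y) (ha : ∀ y, a ≤ g y) :
    a ≤ penalizedInf g φ t :=
  le_iInf fun y => (ha y).trans
    (le_add_of_nonneg_right (EReal.coe_nonneg.2 (mul_nonneg ht (hφ y))))

theorem penalizedInf_add_le (s t : ℝ) (y : X) :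
    penalizedInf g φ s + ((t - s) * φ y : ℝ) ≤ g y + (t * φ y : ℝ) :=
  calc penalizedInf g φ s + ((t - s) * φ y : ℝ)
      ≤ g y + (s * φ y : ℝ) + ((t - s) * φ y : ℝ) := add_le_add_left (iInf_le _ y) _
    _ = g y + (t * φ y : ℝ) := by
      rw [add_assoc, ← EReal.coe_add, ← add_mul, add_sub_cancel]

theorem eventually_le_penalizedInf {r c δ : ℝ} (hδ : 0 < δ) (hφ : ∀ y, 0 ≤ φ y)
    (hnear : ∀ y, φ y < δ → r ≤ g y) (hc : c ≤ penalizedInf g φ s) :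
    ∀ᶠ t in atTop, r ≤ penalizedInf g φ t := by
  have hweight : Tendsto (fun t => (t - s) * δ) atTop atTop :=
    (tendsto_atTop_add_const_right _ (-s) tendsto_id).atTop_mul_const hδ
  filter_upwards [eventually_ge_atTop 0, eventually_ge_atTop s,
    hweight.eventually_ge_atTop (r - c)] with t ht hst hrc
  refine le_iInf fun y => ?_
  rcases lt_or_ge (φ y) δ with hy | hy
  · exact (hnear y hy).trans
      (le_add_of_nonneg_right (EReal.coe_nonneg.2 (mul_nonneg ht (hφ y))))
  · have hreal : r ≤ c + (t - s) * φ y := by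
      linarith [mul_le_mul_of_nonneg_left hy (sub_nonneg.2 hst)]
    calc (r : EReal) ≤ c + ((t - s) * φ y : ℝ) := by exact_mod_cast hreal
      _ ≤ penalizedInf g φ s + ((t - s) * φ y : ℝ) := add_le_add_left hc _
      _ ≤ g y + (t * φ y : ℝ) := penalizedInf_add_le s t y

theorem tendsto_penalizedInf_atTop [TopologicalSpace X] (hφ : ∀ y, 0 ≤ φ y) (hx : φ x = 0)
    (hloc : comap φ (𝓝 0) ≤ 𝓝 x) (hg : LowerSemicontinuousAt g x)
    (hbot : penalizedInf g φ s ≠ ⊥) :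
    Tendsto (penalizedInf g φ) atTop (𝓝 (g x)) := by
  refine tendsto_order.2 ⟨fun a ha => ?_, fun b hb =>
    Eventually.of_forall fun t => (penalizedInf_le_of_eq_zero hx).trans_lt hb⟩
  obtain ⟨r, har, hrg⟩ := EReal.lt_iff_exists_real_btwn.1 ha
  obtain ⟨c, -, hc⟩ := EReal.lt_iff_exists_real_btwn.1 (bot_lt_iff_ne_bot.2 hbot)
  obtain ⟨δ, hδ, hnear⟩ := (nhds_basis_Ioo_pos (0 : ℝ)).comap φ |>.mem_iff.1 (hloc (hg r hrg))
  have hnear' : ∀ y, φ y < δ → r ≤ g y := fun y hy =>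
    (hnear ⟨by linarith [hφ y], by rwa [zero_add]⟩).le
  exact (eventually_le_penalizedInf hδ hφ hnear' hc.le).mono fun _ => har.trans_le

end Penalization

section Localization

variable {E β : Type*} [NormedAddCommGroup E] [NormedSpace ℝ E] [LinearOrder β] {φ : E → β} {x : E}

theorem exists_mem_sphere_le_of_quasiconvexOn (hφ : QuasiconvexOn ℝ Set.univ φ) {ε : ℝ}
    (hε : 0 < ε) {y : E} (hxy : φ x ≤ φ y) (hy : ε ≤ dist x y) :
    ∃ z ∈ Metric.sphere x ε, φ z ≤ φ y := by
  have hdist : 0 < dist x y := hε.trans_le hy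
  have hratio : ε / dist x y ∈ Set.Icc (0 : ℝ) 1 :=
    ⟨div_nonneg hε.le dist_nonneg, (div_le_one hdist).2 hy⟩
  refine ⟨AffineMap.lineMap x y (ε / dist x y), ?_, ?_⟩
  · rw [Metric.mem_sphere, dist_lineMap_left, Real.norm_of_nonneg hratio.1,
      div_mul_cancel₀ _ hdist.ne']
  · exact ((hφ (φ y)).lineMap_mem ⟨Set.mem_univ x, hxy⟩ ⟨Set.mem_univ y, le_rfl⟩ hratio).2

theorem comap_nhds_le_of_quasiconvexOn [ProperSpace E] [TopologicalSpace β] [ClosedIciTopology β]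
    (hφ : QuasiconvexOn ℝ Set.univ φ) (hlsc : LowerSemicontinuous φ)
    (hmin : ∀ y, y ≠ x → φ x < φ y) : comap φ (𝓝 (φ x)) ≤ 𝓝 x := by
  refine Metric.nhds_basis_ball.ge_iff.2 fun ε hε => ?_
  have hle (y : E) : φ x ≤ φ y := by
    rcases eq_or_ne y x with rfl | hy
    exacts [le_rfl, (hmin y hy).le]
  have hsphere {y : E} (hy : y ∉ Metric.ball x ε) : ∃ z ∈ Metric.sphere x ε, φ z ≤ φ y :=
    exists_mem_sphere_le_of_quasiconvexOn hφ hε (hle y) (by simpa [dist_comm] using hy)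
  rcases (Metric.sphere x ε).eq_empty_or_nonempty with hempty | hne
  · refine univ_mem' fun y => ?_
    by_contra hy
    obtain ⟨z, hz, -⟩ := hsphere hy
    exact hempty.le hz
  · obtain ⟨z, hz, hzmin⟩ :=
      (hlsc.lowerSemicontinuousOn _).exists_isMinOn hne (isCompact_sphere x ε)
    have hxz : φ x < φ z := hmin z (Metric.ne_of_mem_sphere hz hε.ne')
    refine ⟨Set.Iio (φ z), Iio_mem_nhds hxz, fun y hy => ?_⟩
    by_contra hball
    obtain ⟨w, hw, hwy⟩ := hsphere hball
    exact (hwy.trans_lt hy).not_ge (hzmin hw)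

end Localization

theorem hasFDerivWithinAt_apply_sub_le_of_convexOn {E : Type*} [NormedAddCommGroup E]
    [NormedSpace ℝ E] {s : Set E} {f : E → ℝ} {f' : E →L[ℝ] ℝ} {x y : E} (hf : ConvexOn ℝ s f)
    (hf' : HasFDerivWithinAt f f' s x) (hx : x ∈ s) (hy : y ∈ s) : f' (y - x) ≤ f y - f x := by
  set ℓ : ℝ →ᵃ[ℝ] E := AffineMap.lineMap x y
  have hderiv : HasDerivWithinAt (f ∘ ℓ) (f' (y - x)) (ℓ ⁻¹' s) 0 :=
    HasFDerivWithinAt.comp_hasDerivWithinAt 0 (by simpa [ℓ] using hf')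
      AffineMap.hasDerivWithinAt_lineMap (Set.mapsTo_preimage ℓ s)
  have hslope := (hf.comp_affineMap ℓ).le_slope_of_hasDerivWithinAt
    (by simpa [ℓ] using hx) (by simpa [ℓ] using hy) one_pos hderiv
  simpa [ℓ, slope_def_field] using hslope

section Bregman

variable {d : ℕ} {ψ : EuclideanSpace ℝ (Fin d) → ℝ} {s : Set (EuclideanSpace ℝ (Fin d))}
  {x y : EuclideanSpace ℝ (Fin d)}

theorem bregmanDiv_self (ψ : EuclideanSpace ℝ (Fin d) → ℝ) (x : EuclideanSpace ℝ (Fin d)) :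
    bregmanDiv ψ x x = 0 := by
  simp [bregmanDiv]

theorem bregmanDiv_nonneg (hconv : ConvexOn ℝ s ψ) (hψ : DifferentiableAt ℝ ψ x) (hx : x ∈ s)
    (hy : y ∈ s) : 0 ≤ bregmanDiv ψ y x := by
  have hgrad := hasFDerivWithinAt_apply_sub_le_of_convexOn hconv
    hψ.hasFDerivAt.hasFDerivWithinAt hx hy
  rw [← inner_gradient_left] at hgrad
  exact sub_nonneg.2 hgrad

theorem strictConvexOn_bregmanDiv (hstrict : StrictConvexOn ℝ s ψ)
    (x : EuclideanSpace ℝ (Fin d)) : StrictConvexOn ℝ s fun y => bregmanDiv ψ y x := by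
  have hlinear : ConvexOn ℝ s fun y => -⟪gradient ψ x, y⟫ :=
    (-(innerSL ℝ (gradient ψ x)).toLinearMap).convexOn hstrict.1
  have hsplit : (fun y => bregmanDiv ψ y x) =
      (ψ + fun y => -⟪gradient ψ x, y⟫) + fun _ => ⟪gradient ψ x, x⟫ - ψ x := by
    ext y
    simp only [bregmanDiv, inner_sub_right, Pi.add_apply]
    ring
  rw [hsplit]
  exact (hstrict.add_convexOn hlinear).add_const _

theorem bregmanDiv_pos (hstrict : StrictConvexOn ℝ s ψ) (hψ : DifferentiableAt ℝ ψ x)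
    (hx : x ∈ s) (hy : y ∈ s) (hyx : y ≠ x) : 0 < bregmanDiv ψ y x := by
  have hnonneg {z} (hz : z ∈ s) : 0 ≤ bregmanDiv ψ z x :=
    bregmanDiv_nonneg hstrict.convexOn hψ hx hz
  refine (hnonneg hy).lt_of_ne' fun hzero => hyx ?_
  exact (strictConvexOn_bregmanDiv hstrict x).eq_of_isMinOn
    (fun z hz => by simpa [hzero] using hnonneg hz)
    (fun z hz => by simpa [bregmanDiv_self] using hnonneg hz) hy hx

theorem comap_bregmanDiv_nhds_zero_le (hstrict : StrictConvexOn ℝ Set.univ ψ)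
    (hψ : DifferentiableAt ℝ ψ x) : comap (fun y => bregmanDiv ψ y x) (𝓝 0) ≤ 𝓝 x := by
  have hconv := (strictConvexOn_bregmanDiv hstrict x).convexOn
  have hmin (y) (hyx : y ≠ x) : bregmanDiv ψ x x < bregmanDiv ψ y x := by
    rw [bregmanDiv_self]
    exact bregmanDiv_pos hstrict hψ (Set.mem_univ x) (Set.mem_univ y) hyx
  simpa only [bregmanDiv_self] using comap_nhds_le_of_quasiconvexOn hconv.quasiconvexOn
    hconv.locallyLipschitz.continuous.lowerSemicontinuous hmin

end Bregman

section Envelope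

variable {d : ℕ} {ψ : EuclideanSpace ℝ (Fin d) → ℝ} {g : EuclideanSpace ℝ (Fin d) → EReal}
  {x : EuclideanSpace ℝ (Fin d)}

theorem leftEnvE_eq_penalizedInf (ψ : EuclideanSpace ℝ (Fin d) → ℝ)
    (g : EuclideanSpace ℝ (Fin d) → EReal) (lam : ℝ) (x : EuclideanSpace ℝ (Fin d)) :
    leftEnvE ψ g lam x = penalizedInf g (fun y => bregmanDiv ψ y x) (1 / lam) :=
  rfl

/-- Prox-boundedness of `g` relative to `ψ`, localized at the single point `x`: some envelope of `g`
does not degenerate to `⊥` there. The value `⊤` is allowed, so that `g ≡ ⊤` is not excluded. -/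
def IsProxBoundedAt (ψ : EuclideanSpace ℝ (Fin d) → ℝ) (g : EuclideanSpace ℝ (Fin d) → EReal)
    (x : EuclideanSpace ℝ (Fin d)) : Prop :=
  ∃ lam : ℝ, 0 < lam ∧ leftEnvE ψ g lam x ≠ ⊥

theorem isProxBoundedAt_of_le (hconv : ConvexOn ℝ Set.univ ψ) (hψ : DifferentiableAt ℝ ψ x)
    {c : ℝ} (hc : ∀ y, c ≤ g y) : IsProxBoundedAt ψ g x := by
  refine ⟨1, one_pos, ne_bot_of_le_ne_bot (EReal.coe_ne_bot c) ?_⟩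
  rw [leftEnvE_eq_penalizedInf]
  exact le_penalizedInf (by norm_num)
    (fun y => bregmanDiv_nonneg hconv hψ (Set.mem_univ x) (Set.mem_univ y)) hc

theorem antitoneOn_leftEnvE (hconv : ConvexOn ℝ Set.univ ψ) (hψ : DifferentiableAt ℝ ψ x) :
    AntitoneOn (fun lam => leftEnvE ψ g lam x) (Set.Ioi 0) := fun _ hs _ _ hst =>
  penalizedInf_mono (fun y => bregmanDiv_nonneg hconv hψ (Set.mem_univ x) (Set.mem_univ y))
    (one_div_le_one_div_of_le hs hst)

theorem leftEnvE_le (ψ : EuclideanSpace ℝ (Fin d) → ℝ) (g : EuclideanSpace ℝ (Fin d) → EReal)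
    (lam : ℝ) (x : EuclideanSpace ℝ (Fin d)) : leftEnvE ψ g lam x ≤ g x :=
  penalizedInf_le_of_eq_zero (bregmanDiv_self ψ x)

theorem tendsto_leftEnvE_nhdsGT_zero (hstrict : StrictConvexOn ℝ Set.univ ψ)
    (hψ : DifferentiableAt ℝ ψ x) (hg : LowerSemicontinuousAt g x)
    (hprox : IsProxBoundedAt ψ g x) :
    Tendsto (fun lam => leftEnvE ψ g lam x) (𝓝[>] 0) (𝓝 (g x)) := by
  obtain ⟨μ, -, hμ⟩ := hprox
  have hnonneg (y) : 0 ≤ bregmanDiv ψ y x :=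
    bregmanDiv_nonneg hstrict.convexOn hψ (Set.mem_univ x) (Set.mem_univ y)
  have hpenalized := tendsto_penalizedInf_atTop hnonneg (bregmanDiv_self ψ x)
    (comap_bregmanDiv_nhds_zero_le hstrict hψ) hg hμ
  simpa only [leftEnvE_eq_penalizedInf, one_div, Function.comp_def] using
    hpenalized.comp tendsto_inv_nhdsGT_zero

end Envelope

theorem stmt5_general {d : ℕ} {ψ : EuclideanSpace ℝ (Fin d) → ℝ}
    {g : EuclideanSpace ℝ (Fin d) → EReal} {x : EuclideanSpace ℝ (Fin d)}
    (hψ : DifferentiableAt ℝ ψ x) (hstrict : StrictConvexOn ℝ Set.univ ψ)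
    (hlsc : LowerSemicontinuousAt g x) (hprox : IsProxBoundedAt ψ g x) :
    AntitoneOn (fun lam => leftEnvE ψ g lam x) (Set.Ioi (0 : ℝ)) ∧
    (∀ lam : ℝ, 0 < lam → leftEnvE ψ g lam x ≤ g x) ∧
    Tendsto (fun lam => leftEnvE ψ g lam x) (𝓝[>] (0 : ℝ)) (𝓝 (g x)) :=
  ⟨antitoneOn_leftEnvE hstrict.convexOn hψ, fun lam _ => leftEnvE_le ψ g lam x,
    tendsto_leftEnvE_nhdsGT_zero hstrict hψ hlsc hprox⟩

/-- For `ψ` continuously differentiable and strictly convex with coercive Bregman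
divergence, and `g` proper, lsc and bounded below, the left Bregman–Moreau envelope
is nonincreasing in `λ`, bounded above by `g`, and increases to `g(x)` as `λ ↓ 0`. -/
theorem stmt5 {d : ℕ} (ψ : EuclideanSpace ℝ (Fin d) → ℝ)
    (hψ : ContDiff ℝ 1 ψ) (hstrict : StrictConvexOn ℝ Set.univ ψ)
    (hcoer : ∀ x : EuclideanSpace ℝ (Fin d),
      Tendsto (fun y => bregmanDiv ψ y x) (comap (fun y => ‖y‖) atTop) atTop)
    (g : EuclideanSpace ℝ (Fin d) → EReal)
    (hproper : ∃ x, g x ≠ ⊤)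
    (hlsc : LowerSemicontinuous g)
    (hbdd : ∃ c : ℝ, ∀ x, (c : EReal) ≤ g x) :
    ∀ x : EuclideanSpace ℝ (Fin d),
      AntitoneOn (fun lam => leftEnvE ψ g lam x) (Set.Ioi (0 : ℝ)) ∧
      (∀ lam : ℝ, 0 < lam → leftEnvE ψ g lam x ≤ g x) ∧
      Tendsto (fun lam => leftEnvE ψ g lam x) (𝓝[>] (0 : ℝ)) (𝓝 (g x)) := by
  obtain ⟨c, hc⟩ := hbdd
  have hdiff := hψ.differentiable one_ne_zero
  exact fun x => stmt5_general (hdiff x) hstrict (hlsc x)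
    (isProxBoundedAt_of_le hstrict.convexOn (hdiff x) hc)
end

section
/- Let ψ : ℝ^d → ℝ be twice continuously differentiable and strictly convex, let g : ℝ^d → ℝ ∪ {+∞} be proper, lower semicontinuous, and bounded below, and let λ > 0. Suppose that for each y ∈ ℝ^d the function y' ↦ g(y') + (1/λ)·D_ψ(y, y') attains its infimum at a unique point q(y) ∈ ℝ^d, and that the map q : ℝ^d → ℝ^d is continuous. Then the right Bregman–Moreau envelope env→_{λ,g}^ψ is continuously differentiable on ℝ^d with ∇env→_{λ,g}^ψ(y) = (1/λ) · (∇ψ(y) − ∇ψ(q(y))) for every y ∈ ℝ^d. -/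
open scoped RealInnerProductSpace

/-- The right Bregman–Moreau envelope of an extended-real-valued `g` associated with `ψ`. -/
noncomputable def rightEnvE {d : ℕ} (ψ : EuclideanSpace ℝ (Fin d) → ℝ)
    (g : EuclideanSpace ℝ (Fin d) → EReal) (lam : ℝ)
    (x : EuclideanSpace ℝ (Fin d)) : EReal :=
  ⨅ y : EuclideanSpace ℝ (Fin d), (g y + ((1 / lam * bregmanDiv ψ x y : ℝ) : EReal))

/-! Expanding the Bregman divergence gives
`env x - ψ x / λ = ⨅ y, (g y - ψ y / λ + ⟪∇ψ y, y - x⟫ / λ)`,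
an infimum of affine functions of `x`, attained at `y = q x`. So `env - ψ / λ` has the supergradient
`-∇ψ (q z) / λ` at every `z`. A function with a selection of supergradients that is continuous at a
point is differentiable there, with the selected supergradient as derivative. -/

open Filter Topology

section Supergradient

variable {E : Type*} [NormedAddCommGroup E] [NormedSpace ℝ E]

/-- `p` is a supergradient of `f` at `z`: the affine function of slope `p` which agrees with `f` at
`z` majorizes `f` on the whole space. Slopes are continuous linear forms, so that no inner product
is needed. -/
def IsSupergradientAt (f : E → ℝ) (p : E →L[ℝ] ℝ) (z : E) : Prop :=
  ∀ x, f x ≤ f z + p (x - z)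

theorem IsSupergradientAt.abs_sub_sub_le {f : E → ℝ} {p p' : E →L[ℝ] ℝ} {x y : E}
    (hx : IsSupergradientAt f p x) (hy : IsSupergradientAt f p' y) :
    |f x - f y - p' (x - y)| ≤ ‖p - p'‖ * ‖x - y‖ := by
  have upper : f x - f y - p' (x - y) ≤ 0 := by linarith [hy x]
  have lower : (p - p') (x - y) ≤ f x - f y - p' (x - y) := by
    have flip : p (y - x) = -p (x - y) := by rw [← map_neg, neg_sub]
    rw [sub_apply]
    linarith [hx y]
  calc |f x - f y - p' (x - y)|
      ≤ |(p - p') (x - y)| := abs_le_abs_of_nonpos upper lower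
    _ ≤ ‖p - p'‖ * ‖x - y‖ := (p - p').le_opNorm (x - y)

theorem hasFDerivAt_of_isSupergradientAt {f : E → ℝ} {p : E → E →L[ℝ] ℝ} {y : E}
    (h : ∀ᶠ z in 𝓝 y, IsSupergradientAt f (p z) z) (hp : ContinuousAt p y) :
    HasFDerivAt f (p y) y := by
  refine .of_isLittleO <| Asymptotics.isLittleO_iff.2 fun ε hε => ?_
  filter_upwards [h, hp.eventually (Metric.closedBall_mem_nhds (p y) hε)] with x hx hxε
  calc ‖f x - f y - p y (x - y)‖
      ≤ ‖p x - p y‖ * ‖x - y‖ := hx.abs_sub_sub_le h.self_of_nhds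
    _ ≤ ε * ‖x - y‖ := by gcongr; exact mem_closedBall_iff_norm.1 hxε

end Supergradient

section AttainedInfimum

theorem iInf_eq_of_forall_le {ι α : Type*} [CompleteLattice α] {f : ι → α} {i : ι}
    (h : ∀ j, f i ≤ f j) : ⨅ j, f j = f i :=
  le_antisymm (iInf_le f i) (le_iInf h)

variable {Y : Type*} {g : Y → EReal} {a b : Y → ℝ} {v : Y}

theorem ne_top_of_forall_add_coe_le (hg : ∃ y, g y ≠ ⊤) (hv : ∀ y, g v + a v ≤ g y + a y) :
    g v ≠ ⊤ := by
  obtain ⟨y, hy⟩ := hg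
  have sum_ne_top : g v + a v ≠ ⊤ :=
    ne_top_of_le_ne_top (EReal.add_ne_top hy (EReal.coe_ne_top _)) (hv y)
  exact (EReal.add_ne_top_iff_ne_top_left (EReal.coe_ne_bot _) (EReal.coe_ne_top _)).1 sum_ne_top

theorem toReal_iInf_add_coe_le (hv : ∀ y, g v + b v ≤ g y + b y) (hgv : g v ≠ ⊤)
    (hbot : ⨅ y, (g y + a y) ≠ ⊥) :
    (⨅ y, (g y + a y)).toReal ≤ (⨅ y, (g y + b y)).toReal + (a v - b v) := by
  have attained : ⨅ y, (g y + b y) = g v + b v := iInf_eq_of_forall_le hv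
  have hle : ⨅ y, (g y + a y) ≤ g v + a v := iInf_le _ v
  have hgv' : g v ≠ ⊥ := fun h => hbot <| by simpa [h] using hle
  have toReal_le : (⨅ y, (g y + a y)).toReal ≤ (g v + a v).toReal :=
    EReal.toReal_le_toReal hle hbot (EReal.add_ne_top hgv (EReal.coe_ne_top _))
  have toReal_add (t : ℝ) : (g v + t).toReal = (g v).toReal + t :=
    EReal.toReal_add hgv hgv' (EReal.coe_ne_top t) (EReal.coe_ne_bot t)
  rw [toReal_add] at toReal_le
  rw [attained, toReal_add]
  linarith

end AttainedInfimum

section BregmanEnvelope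

variable {E : Type*} [NormedAddCommGroup E] [NormedSpace ℝ E]

/-- The Bregman divergence on a normed space, with the Fréchet derivative of `ψ` in place of its
gradient. -/
noncomputable def bregmanDivergence (ψ : E → ℝ) (x y : E) : ℝ :=
  ψ x - ψ y - fderiv ℝ ψ y (x - y)

/-- The right Bregman–Moreau envelope on a normed space. The divergence is weighted by a
coefficient `c`, which is `1 / λ` in the usual parametrization. -/
noncomputable def bregmanEnvelope (ψ : E → ℝ) (g : E → EReal) (c : ℝ) (x : E) : EReal :=
  ⨅ y, (g y + ((c * bregmanDivergence ψ x y : ℝ) : EReal))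

variable {ψ : E → ℝ} {g : E → EReal} {c : ℝ} {q : E → E}

theorem bregmanDivergence_sub_bregmanDivergence (x z w : E) :
    bregmanDivergence ψ x w - bregmanDivergence ψ z w = ψ x - ψ z - fderiv ℝ ψ w (x - z) := by
  simp only [bregmanDivergence, map_sub]
  ring

theorem isSupergradientAt_bregmanEnvelope_sub (hproper : ∃ x, g x ≠ ⊤) (hbot : ∀ x, g x ≠ ⊥)
    (hmin : ∀ x y, g (q x) + ((c * bregmanDivergence ψ x (q x) : ℝ) : EReal) ≤
      g y + ((c * bregmanDivergence ψ x y : ℝ) : EReal)) (z : E) :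
    IsSupergradientAt (fun x => (bregmanEnvelope ψ g c x).toReal - c * ψ x)
      (-(c • fderiv ℝ ψ (q z))) z := by
  intro x
  have hgq : g (q z) ≠ ⊤ :=
    ne_top_of_forall_add_coe_le (a := fun y => c * bregmanDivergence ψ z y) hproper (hmin z)
  have env_ne_bot : bregmanEnvelope ψ g c x ≠ ⊥ := by
    rw [bregmanEnvelope, iInf_eq_of_forall_le (hmin x)]
    exact EReal.add_ne_bot_iff.2 ⟨hbot _, EReal.coe_ne_bot _⟩
  have env_le : (bregmanEnvelope ψ g c x).toReal ≤ (bregmanEnvelope ψ g c z).toReal +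
      (c * bregmanDivergence ψ x (q z) - c * bregmanDivergence ψ z (q z)) :=
    toReal_iInf_add_coe_le (hmin z) hgq env_ne_bot
  rw [← mul_sub, bregmanDivergence_sub_bregmanDivergence] at env_le
  simp only [neg_apply, smul_apply, smul_eq_mul]
  linarith

theorem hasFDerivAt_bregmanEnvelope (hproper : ∃ x, g x ≠ ⊤) (hbot : ∀ x, g x ≠ ⊥)
    (hmin : ∀ x y, g (q x) + ((c * bregmanDivergence ψ x (q x) : ℝ) : EReal) ≤
      g y + ((c * bregmanDivergence ψ x y : ℝ) : EReal))
    {y : E} (hψ : DifferentiableAt ℝ ψ y) (hq : ContinuousAt (fun x => fderiv ℝ ψ (q x)) y) :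
    HasFDerivAt (fun x => (bregmanEnvelope ψ g c x).toReal)
      (c • (fderiv ℝ ψ y - fderiv ℝ ψ (q y))) y := by
  have concave_part : HasFDerivAt (fun x => (bregmanEnvelope ψ g c x).toReal - c * ψ x)
      (-(c • fderiv ℝ ψ (q y))) y :=
    hasFDerivAt_of_isSupergradientAt
      (.of_forall (isSupergradientAt_bregmanEnvelope_sub hproper hbot hmin)) (hq.const_smul c).neg
  rw [smul_sub, sub_eq_neg_add]
  exact (concave_part.add (hψ.hasFDerivAt.const_mul c)).congr_of_eventuallyEq
    (.of_forall fun x => (sub_add_cancel _ _).symm)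

theorem stmt10_general (hψ : ContDiff ℝ 1 ψ) (hproper : ∃ x, g x ≠ ⊤) (hbot : ∀ x, g x ≠ ⊥)
    (hmin : ∀ x y, g (q x) + ((c * bregmanDivergence ψ x (q x) : ℝ) : EReal) ≤
      g y + ((c * bregmanDivergence ψ x y : ℝ) : EReal))
    (hq : Continuous fun x => fderiv ℝ ψ (q x)) :
    ContDiff ℝ 1 (fun x => (bregmanEnvelope ψ g c x).toReal) ∧
    ∀ y, HasFDerivAt (fun x => (bregmanEnvelope ψ g c x).toReal)
      (c • (fderiv ℝ ψ y - fderiv ℝ ψ (q y))) y := by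
  have hderiv y := hasFDerivAt_bregmanEnvelope hproper hbot hmin
    (hψ.differentiable one_ne_zero y) hq.continuousAt
  have hcont := ((hψ.continuous_fderiv one_ne_zero).sub hq).const_smul c
  exact ⟨contDiff_one_iff_hasFDerivAt.2 ⟨_, hcont, hderiv⟩, hderiv⟩

end BregmanEnvelope

theorem bregmanDiv_eq_bregmanDivergence {d : ℕ} (ψ : EuclideanSpace ℝ (Fin d) → ℝ) :
    bregmanDiv ψ = bregmanDivergence ψ := by
  ext x y
  rw [bregmanDiv, bregmanDivergence, inner_gradient_left]

theorem rightEnvE_eq_bregmanEnvelope {d : ℕ} (ψ : EuclideanSpace ℝ (Fin d) → ℝ)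
    (g : EuclideanSpace ℝ (Fin d) → EReal) (lam : ℝ) :
    rightEnvE ψ g lam = bregmanEnvelope ψ g (1 / lam) := by
  ext x
  rw [rightEnvE, bregmanEnvelope, bregmanDiv_eq_bregmanDivergence]

/-- If the right Bregman proximity operator `q` is single-valued and continuous, then
the right Bregman–Moreau envelope is continuously differentiable with
`∇env→_{λ,g}^ψ(y) = (1/λ)·(∇ψ(y) − ∇ψ(q(y)))`. -/
theorem stmt10 {d : ℕ} (ψ : EuclideanSpace ℝ (Fin d) → ℝ)
    (hψ : ContDiff ℝ 2 ψ) (hstrict : StrictConvexOn ℝ Set.univ ψ)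
    (g : EuclideanSpace ℝ (Fin d) → EReal)
    (hproper : ∃ x, g x ≠ ⊤)
    (hlsc : LowerSemicontinuous g)
    (hbdd : ∃ c : ℝ, ∀ x, (c : EReal) ≤ g x)
    (lam : ℝ) (hlam : 0 < lam)
    (q : EuclideanSpace ℝ (Fin d) → EuclideanSpace ℝ (Fin d))
    (hmin : ∀ y y', g (q y) + ((1 / lam * bregmanDiv ψ y (q y) : ℝ) : EReal) ≤
      g y' + ((1 / lam * bregmanDiv ψ y y' : ℝ) : EReal))
    (huniq : ∀ y y', g y' + ((1 / lam * bregmanDiv ψ y y' : ℝ) : EReal) =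
      g (q y) + ((1 / lam * bregmanDiv ψ y (q y) : ℝ) : EReal) → y' = q y)
    (hq : Continuous q) :
    ContDiff ℝ 1 (fun y => (rightEnvE ψ g lam y).toReal) ∧
    ∀ y : EuclideanSpace ℝ (Fin d),
      HasGradientAt (fun y' => (rightEnvE ψ g lam y').toReal)
        ((1 / lam) • (gradient ψ y - gradient ψ (q y))) y := by
  obtain ⟨b, hb⟩ := hbdd
  simp only [hasGradientAt_iff_hasFDerivAt, map_smul, map_sub, toDual_gradient,
    rightEnvE_eq_bregmanEnvelope, bregmanDiv_eq_bregmanDivergence] at hmin ⊢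
  exact stmt10_general (hψ.of_le one_le_two) hproper
    (fun x => ne_bot_of_le_ne_bot (EReal.coe_ne_bot b) (hb x)) hmin
    ((hψ.continuous_fderiv two_ne_zero).comp hq)
end
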